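/- arXiv:1706.06740 — 2 statements merged into one kernel-verified Lean document; each statement's English description precedes it below -/
import Mathlib

section
/- The KKM lemma: if $C_1, \dots, C_n$ are closed subsets of the unit simplex $\Delta \subseteq \mathbb{R}^n$ such that for every nonempty $J \subseteq \{1,\dots,n\}$ the face $\Delta_J = \operatorname{conv}\{e_j : j \in J\}$ is contained in $\bigcup_{j \in J} C_j$, then $\bigcap_{i=1}^n C_i \neq \emptyset$. -/
open Finset

/-- A finite set `σ` is dominant for the family of preorders `u` if no point lies strictly above
the `u i`-minimum of `σ` for every `i`. -/
def IsDominant {I X α : Type*} [LinearOrder α] (u : I → X → α) (σ : Finset X) : Prop :=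
  ∀ y, ∃ i, ∀ x ∈ σ, u i y ≤ u i x

theorem IsDominant.mono {I X α : Type*} [LinearOrder α] {u : I → X → α}
    {σ τ : Finset X} (h : IsDominant u σ) (hτ : τ ⊆ σ) : IsDominant u τ := fun y => (h y).imp fun _ hi x hx => hi x (hτ hx)

/-- If `σ` has as many elements as there are colours but misses a colour, then the number of its
facets whose colours are exactly those other than `i₀` is even. -/
theorem even_card_facets {I X : Type*} [Fintype I] [DecidableEq I] [DecidableEq X]
    (c : X → I) (i₀ : I) {σ : Finset X} (hσ : #σ = Fintype.card I) (hc : σ.image c ≠ univ) :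
    Even #{x ∈ σ | (σ.erase x).image c = univ.erase i₀} := by
  rcases ({x ∈ σ | (σ.erase x).image c = univ.erase i₀}).eq_empty_or_nonempty with h | ⟨x, hx⟩
  · simp [h]
  obtain ⟨hxσ, hx⟩ := mem_filter.1 hx
  have hinj : Set.InjOn c (σ.erase x) := by
    rw [← card_image_iff, hx, card_erase_of_mem hxσ, card_erase_of_mem (mem_univ _), card_univ, hσ]
  have hcx : c x ∈ (σ.erase x).image c := by
    rw [hx]
    refine mem_erase.2 ⟨fun h => hc ?_, mem_univ _⟩
    rw [← insert_erase hxσ, image_insert, hx, h, insert_erase (mem_univ _)]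
  obtain ⟨x', hx', hcx'⟩ := mem_image.1 hcx
  have hx'' := mem_erase.1 hx'
  have : ({y ∈ σ | (σ.erase y).image c = univ.erase i₀}) = {x, x'} := by
    ext y
    simp only [mem_filter, mem_insert, mem_singleton]
    constructor
    · rintro ⟨hy, hyc⟩
      by_contra! hne
      have hcy : c y ∈ (σ.erase y).image c := by
        rw [hyc, ← hx]
        exact mem_image_of_mem c (mem_erase.2 ⟨hne.1, hy⟩)
      obtain ⟨z, hz, hzy⟩ := mem_image.1 hcy
      obtain ⟨hzy', hz⟩ := mem_erase.1 hz
      by_cases hzx : z = x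
      · subst hzx
        exact hne.2 (hinj (mem_erase.2 ⟨hne.1, hy⟩) hx' (by rw [hcx', hzy]))
      · exact hzy' (hinj (mem_erase.2 ⟨hzx, hz⟩) (mem_erase.2 ⟨hne.1, hy⟩) hzy)
    · rintro (rfl | rfl)
      · exact ⟨hxσ, hx⟩
      · refine ⟨hx''.2, ?_⟩
        rw [← hx]
        ext k
        simp only [mem_image, mem_erase]
        constructor
        · rintro ⟨z, ⟨hz, hzσ⟩, rfl⟩
          by_cases hzx : z = x
          · exact ⟨y, hx'', by rw [hcx', hzx]⟩
          · exact ⟨z, ⟨hzx, hzσ⟩, rfl⟩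
        · rintro ⟨z, ⟨hz, hzσ⟩, rfl⟩
          by_cases hzx : z = y
          · exact ⟨x, ⟨hx''.1.symm, hxσ⟩, by rw [← hcx', hzx]⟩
          · exact ⟨z, ⟨hzx, hzσ⟩, rfl⟩
  rw [this, card_pair hx''.1.symm]
  exact even_two

section Scarf

variable {I X α : Type*} [Fintype I] [DecidableEq I] [Fintype X] [DecidableEq X] [LinearOrder α]

open Classical in
/-- A dominant set with one element fewer than there are orders extends to a dominant set in
exactly two ways, as soon as one can strictly exceed all but any given one of its minima. -/
theorem IsDominant.card_extensions {u : I → X → α} (hu : ∀ i, Function.Injective (u i))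
    {τ : Finset X} (hτ : IsDominant u τ) (hcard : #τ + 1 = Fintype.card I) (hne : τ.Nonempty)
    (habove : ∀ k, ∃ y, ∀ l, l ≠ k → ∃ z ∈ τ, u l z < u l y) :
    #{x | x ∉ τ ∧ IsDominant u (insert x τ)} = 2 := by
  choose a haτ ha using fun i => τ.exists_min_image (u i) hne
  have hsurj : ∀ t ∈ τ, ∃ l, a l = t := fun t ht => by
    obtain ⟨l, hl⟩ := hτ t
    exact ⟨l, hu l (le_antisymm (ha l t ht) (hl _ (haτ l)))⟩
  obtain ⟨i, -, j, -, hij, haij⟩ := exists_ne_map_eq_of_card_lt_of_maps_to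
    (s := (univ : Finset I)) (t := τ) (f := a) (by rw [card_univ]; lia) (fun l _ => haτ l)
  have hM : ∀ k, ∃ x, (∀ l, l ≠ k → u l (a l) < u l x) ∧
      ∀ y, (∀ l, l ≠ k → u l (a l) < u l y) → u k y ≤ u k x := fun k => by
    obtain ⟨y, hy⟩ := habove k
    obtain ⟨x, hx, hx'⟩ := exists_max_image
      ({x | ∀ l, l ≠ k → u l (a l) < u l x} : Finset X) (u k) ⟨y, by
        simp only [mem_filter, mem_univ, true_and]
        intro l hl
        obtain ⟨z, hz, hzy⟩ := hy l hl
        exact (ha l z hz).trans_lt hzy⟩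
    simp only [mem_filter, mem_univ, true_and] at hx hx'
    exact ⟨x, hx, hx'⟩
  choose m hm hmax using hM
  have hdom : ∀ k, IsDominant u (insert (m k) τ) := fun k y => by
    by_cases hy : ∀ l, l ≠ k → u l (a l) < u l y
    · refine ⟨k, fun x hx => ?_⟩
      rcases mem_insert.1 hx with rfl | hxτ
      · exact hmax k y hy
      · obtain ⟨l, hl⟩ := hτ (m k)
        by_cases hlk : l = k
        · subst hlk
          exact (hmax l y hy).trans (hl x hxτ)
        · exact absurd (hl _ (haτ l)) (hm k l hlk).not_ge
    · push Not at hy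
      obtain ⟨l, hlk, hl⟩ := hy
      refine ⟨l, fun x hx => ?_⟩
      rcases mem_insert.1 hx with rfl | hx
      · exact hl.trans (hm k l hlk).le
      · exact hl.trans (ha l x hx)
  have hnot : ∀ k k', k ≠ k' → a k = a k' → m k ∉ τ := fun k k' hk hak hmem => by
    obtain ⟨l, hl⟩ := hsurj _ hmem
    by_cases hlk : l = k
    · subst hlk
      have := hm l k' hk.symm
      rw [← hak, hl] at this
      exact lt_irrefl _ this
    · have := hm k l hlk
      rw [hl] at this
      exact lt_irrefl _ this
  rw [card_eq_two]
  refine ⟨m i, m j, fun h => ?_, ?_⟩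
  · obtain ⟨l, hl⟩ := hτ (m i)
    by_cases hli : l = i
    · subst hli
      have := hm j l hij
      rw [← h] at this
      exact absurd (hl _ (haτ l)) this.not_ge
    · exact absurd (hl _ (haτ l)) (hm i l hli).not_ge
  ext x
  simp only [mem_filter, mem_univ, true_and, mem_insert, mem_singleton]
  constructor
  · rintro ⟨hxτ, hx⟩
    obtain ⟨k, hk⟩ := hx x
    have hl : ∀ t ∈ τ, ∃ l, a l = t ∧ u l t < u l x := fun t ht => by
      obtain ⟨l, hl⟩ := hx t
      refine ⟨l, hu l (le_antisymm (ha l t ht) (hl _ (mem_insert_of_mem (haτ l)))), ?_⟩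
      refine lt_of_le_of_ne (hl x (mem_insert_self _ _)) fun h => hxτ ?_
      rwa [← hu l h]
    have : Nonempty I := ⟨i⟩
    choose! b hab hb using hl
    have hbk : ∀ t ∈ τ, b t ≠ k := fun t ht h => by
      have := hb t ht
      rw [h] at this
      exact absurd (hk t (mem_insert_of_mem ht)) this.not_ge
    have himage : τ.image b = univ.erase k := by
      refine eq_of_subset_of_card_le (fun l hl => ?_) ?_
      · obtain ⟨t, ht, rfl⟩ := mem_image.1 hl
        exact mem_erase.2 ⟨hbk t ht, mem_univ _⟩
      · rw [card_image_of_injOn, card_erase_of_mem (mem_univ k), card_univ]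
        · lia
        · intro t ht t' ht' h
          rw [← hab t ht, ← hab t' ht', h]
    have hbs : ∀ l, l ≠ k → ∃ t ∈ τ, b t = l := fun l hl => by
      have : l ∈ τ.image b := by rw [himage]; exact mem_erase.2 ⟨hl, mem_univ _⟩
      exact mem_image.1 this
    have hxM : ∀ l, l ≠ k → u l (a l) < u l x := fun l hl => by
      obtain ⟨t, ht, rfl⟩ := hbs l hl
      rw [hab t ht]
      exact hb t ht
    have hxk : x = m k := by
      refine hu k (le_antisymm (hmax k x hxM) ?_)
      obtain ⟨l, hl⟩ := hx (m k)
      by_cases hlk : l = k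
      · subst hlk
        exact hl x (mem_insert_self _ _)
      · exact absurd (hl _ (mem_insert_of_mem (haτ l))) (hm k l hlk).not_ge
    by_cases hki : k = i
    · exact Or.inl (hki ▸ hxk)
    by_cases hkj : k = j
    · exact Or.inr (hkj ▸ hxk)
    obtain ⟨t, ht, hti⟩ := hbs i (Ne.symm hki)
    obtain ⟨t', ht', htj⟩ := hbs j (Ne.symm hkj)
    have h1 := hab t ht
    have h2 := hab t' ht'
    rw [hti] at h1
    rw [htj] at h2
    have : t = t' := by rw [← h1, ← h2, haij]
    exact absurd (by rw [← hti, ← htj, this]) hij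
  · rintro (rfl | rfl)
    · exact ⟨hnot i j hij haij, hdom i⟩
    · exact ⟨hnot j i hij.symm haij.symm, hdom j⟩

open Classical in
/-- The facet consisting of all slack elements but `s i₀` lies in exactly one dominant set. -/
theorem card_extensions_slack {u : I → X → α} (hu : ∀ i, Function.Injective (u i))
    {s : I → X} (hs : ∀ i x, u i (s i) ≤ u i x)
    (hs' : ∀ i k, k ≠ i → ∀ x ∉ Set.range s, u k x < u k (s i))
    (hX : ∃ x, x ∉ Set.range s) (i₀ : I) :
    #{x | x ∉ (univ.erase i₀).image s ∧
      IsDominant u (insert x ((univ.erase i₀).image s))} = 1 := by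
  obtain ⟨z, hz⟩ := hX
  obtain ⟨m, hm, hmax⟩ := exists_max_image ({x | x ∉ Set.range s} : Finset X) (u i₀)
    ⟨z, by simpa using hz⟩
  simp only [mem_filter, mem_univ, true_and] at hm hmax
  rw [card_eq_one]
  refine ⟨m, ?_⟩
  have hms : ∀ i, ¬ u i m ≤ u i (s i) := fun i h => hm ⟨i, hu i (le_antisymm (hs i m) h)⟩
  ext x
  simp only [mem_filter, mem_univ, true_and, mem_singleton]
  constructor
  · rintro ⟨hx, hdom⟩
    obtain ⟨i, hi⟩ := hdom m
    have hii : i = i₀ := by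
      by_contra h
      exact hms i (hi _ (mem_insert_of_mem (mem_image_of_mem s (mem_erase.2 ⟨h, mem_univ _⟩))))
    subst hii
    have hxm := hi x (mem_insert_self _ _)
    refine hu i (le_antisymm (hmax x ?_) hxm)
    rintro ⟨k, rfl⟩
    by_cases hk : k = i
    · exact hms i (hk ▸ hxm)
    · exact hx (mem_image_of_mem s (mem_erase.2 ⟨hk, mem_univ _⟩))
  · rintro rfl
    refine ⟨fun h => ?_, fun y => ?_⟩
    · obtain ⟨k, -, rfl⟩ := mem_image.1 h
      exact hm ⟨k, rfl⟩
    · by_cases hy : y ∈ Set.range s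
      · obtain ⟨k, rfl⟩ := hy
        exact ⟨k, fun x _ => hs k x⟩
      · refine ⟨i₀, fun w hw => ?_⟩
        rcases mem_insert.1 hw with rfl | hw
        · exact hmax y hy
        · obtain ⟨k, hk, rfl⟩ := mem_image.1 hw
          exact (hs' k i₀ (mem_erase.1 hk).1.symm y hy).le

open Classical in
/-- **Scarf's lemma**, for injective order functions with slack elements `s i`. -/
theorem exists_isDominant_of_injective [Nonempty I] {u : I → X → α}
    (hu : ∀ i, Function.Injective (u i))
    {s : I → X} (hs : ∀ i x, u i (s i) ≤ u i x)
    (hs' : ∀ i k, k ≠ i → ∀ x ∉ Set.range s, u k x < u k (s i))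
    (hX : ∃ x, x ∉ Set.range s) (c : X → I) (hc : ∀ i, c (s i) = i) :
    ∃ σ : Finset X, #σ = Fintype.card I ∧ σ.image c = univ ∧ IsDominant u σ := by
  by_contra! hcon
  obtain ⟨i₀⟩ := ‹Nonempty I›
  have hIpos : 0 < Fintype.card I := Fintype.card_pos_iff.2 ⟨i₀⟩
  let rooms : Finset (Finset X) := {σ | #σ = Fintype.card I ∧ IsDominant u σ}
  let doors : Finset (Finset X) :=
    {τ | #τ + 1 = Fintype.card I ∧ τ.image c = univ.erase i₀}
  let P := rooms.sigma fun σ => {x ∈ σ | (σ.erase x).image c = univ.erase i₀}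
  let Q := doors.sigma fun τ => ({x | x ∉ τ ∧ IsDominant u (insert x τ)} : Finset X)
  have hPQ : #P = #Q := by
    refine card_nbij' (fun p => ⟨p.1.erase p.2, p.2⟩) (fun q => ⟨insert q.2 q.1, q.2⟩) ?_ ?_ ?_ ?_
    · rintro ⟨σ, x⟩ h
      simp only [P, Q, rooms, doors, mem_coe, mem_sigma, mem_filter, mem_univ, true_and] at h ⊢
      obtain ⟨⟨h1, h2⟩, h3, h4⟩ := h
      refine ⟨⟨?_, h4⟩, notMem_erase _ _, by rwa [insert_erase h3]⟩
      rw [card_erase_of_mem h3]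
      lia
    · rintro ⟨τ, x⟩ h
      simp only [P, Q, rooms, doors, mem_coe, mem_sigma, mem_filter, mem_univ, true_and] at h ⊢
      obtain ⟨⟨h1, h2⟩, h3, h4⟩ := h
      exact ⟨⟨by rw [card_insert_of_notMem h3, h1], h4⟩, mem_insert_self _ _,
        by rwa [erase_insert h3]⟩
    · rintro ⟨σ, x⟩ h
      simp only [P, mem_coe, mem_sigma, mem_filter] at h
      simp only [insert_erase h.2.1]
    · rintro ⟨τ, x⟩ h
      simp only [Q, mem_coe, mem_sigma, mem_filter] at h
      simp only [erase_insert h.2.2.1]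
  have hP : Even #P := by
    rw [card_sigma]
    refine even_sum _ fun σ hσ => ?_
    simp only [rooms, mem_filter, mem_univ, true_and] at hσ
    exact even_card_facets c i₀ hσ.1 fun h => hcon σ hσ.1 h hσ.2
  have hsinj : Function.Injective s := Function.LeftInverse.injective hc
  have hmem : (univ.erase i₀).image s ∈ doors := by
    simp only [doors, mem_filter, mem_univ, true_and]
    constructor
    · rw [card_image_of_injective _ hsinj, card_erase_of_mem (mem_univ _), card_univ]
      lia
    · rw [image_image, show c ∘ s = id from funext hc, image_id]
  have hQ : Odd #Q := by
    rw [card_sigma, ← add_sum_erase _ _ hmem, card_extensions_slack hu hs hs' hX]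
    refine Even.one_add (even_sum _ fun τ hτ => ?_)
    simp only [doors, mem_erase, mem_filter, mem_univ, true_and] at hτ
    obtain ⟨hne, hcard, hcτ⟩ := hτ
    by_cases hdom : IsDominant u τ
    · have hz : ∃ z ∈ τ, z ∉ Set.range s := by
        by_contra! h
        refine hne (ext fun x => ⟨fun hx => ?_, fun hx => ?_⟩)
        · obtain ⟨k, rfl⟩ := h x hx
          refine mem_image_of_mem s ?_
          rw [← hcτ, ← hc k]
          exact mem_image.2 ⟨s k, hx, by simp [hc]⟩
        · obtain ⟨k, hk, rfl⟩ := mem_image.1 hx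
          rw [← hcτ] at hk
          obtain ⟨w, hw, rfl⟩ := mem_image.1 hk
          obtain ⟨l, rfl⟩ := h w hw
          rwa [hc]
      obtain ⟨z, hzτ, hz⟩ := hz
      rw [hdom.card_extensions hu hcard ⟨z, hzτ⟩ fun k =>
        ⟨s k, fun l hl => ⟨z, hzτ, hs' k l hl z hz⟩⟩]
      exact even_two
    · rw [card_eq_zero.2]
      · simp
      · exact filter_eq_empty_iff.2 fun x _ h => hdom (h.2.mono (subset_insert _ _))
  exact Nat.not_even_iff_odd.2 hQ (hPQ ▸ hP)

/-- **Scarf's lemma**, for order functions that need not be injective. -/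
theorem exists_isDominant [Nonempty I] {v : I → X → α} {s : I → X}
    (hs : ∀ i x, x ≠ s i → v i (s i) < v i x)
    (hs' : ∀ i k, k ≠ i → ∀ x ∉ Set.range s, v k x < v k (s i))
    (hX : ∃ x, x ∉ Set.range s) (c : X → I) (hc : ∀ i, c (s i) = i) :
    ∃ σ : Finset X, σ.image c = univ ∧ #σ = Fintype.card I ∧ IsDominant v σ := by
  let u : I → X → α ×ₗ Fin (Fintype.card X) := fun i x => toLex (v i x, Fintype.equivFin X x)
  have hlt : ∀ i x y, v i x < v i y → u i x < u i y := fun i x y h =>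
    Prod.Lex.toLex_lt_toLex.2 (Or.inl h)
  obtain ⟨σ, h1, h2, h3⟩ := exists_isDominant_of_injective (u := u) (s := s)
    (fun i x y h => (Fintype.equivFin X).injective (congrArg Prod.snd (toLex.injective h)))
    (fun i x => by
      by_cases h : x = s i
      · rw [h]
      · exact (hlt _ _ _ (hs i x h)).le)
    (fun i k hk x hx => hlt _ _ _ (hs' i k hk x hx)) hX c hc
  refine ⟨σ, h2, h1, fun y => ?_⟩
  obtain ⟨i, hi⟩ := h3 y
  exact ⟨i, fun x hx => le_of_not_gt fun h => (hi x hx).not_gt (hlt _ _ _ h)⟩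

end Scarf

/-- For every colouring of the grid `{a : I → ℕ | ∑ i, a i = N}` there is a grid point which, for
every `i`, has small `i`-th coordinate or is close to a point of colour `i`. -/
theorem exists_grid_point_near_colors {I : Type*} [Fintype I] [DecidableEq I] [Nonempty I] (N : ℕ)
    (c : (I → ℕ) → I) :
    ∃ x : I → ℕ, ∑ i, x i = N ∧ ∀ i, x i ≤ Fintype.card I ∨
      ∃ w : I → ℕ, ∑ i, w i = N ∧ c w = i ∧
        ∀ k, w k ≤ x k + Fintype.card I ∧ x k ≤ w k + Fintype.card I := by
  classical
  let G := {a : I → ℕ // a ∈ piAntidiag (univ : Finset I) N}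
  have hG : ∀ a : G, ∑ i, a.1 i = N := fun a => (mem_piAntidiag.1 a.2).1
  have mkG : ∀ a : I → ℕ, ∑ i, a i = N → a ∈ piAntidiag (univ : Finset I) N := fun a ha =>
    mem_piAntidiag.2 ⟨ha, fun _ _ => mem_univ _⟩
  have hle : ∀ (a : G) i, a.1 i ≤ N := fun a i =>
    (single_le_sum (f := a.1) (fun _ _ => Nat.zero_le _) (mem_univ i)).trans (hG a).le
  let v : I → G ⊕ I → ℤ := fun i => Sum.elim (fun a => (a.1 i : ℤ))
    fun j => if j = i then -1 else N + 1
  obtain ⟨i₁⟩ := id ‹Nonempty I›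
  let g₀ : G := ⟨Pi.single i₁ N, mkG _ (by simp)⟩
  obtain ⟨σ, hσc, -, hdom⟩ := exists_isDominant (v := v) (s := Sum.inr)
    (by
      rintro i (a | j) h
      · simp only [v, Sum.elim_inl, Sum.elim_inr, if_true]
        lia
      · have : j ≠ i := fun h' => h (by rw [h'])
        simp only [v, Sum.elim_inr, if_true, if_neg this]
        lia)
    (by
      rintro i k hk (a | j) h
      · have := hle a k
        simp only [v, Sum.elim_inl, Sum.elim_inr, if_neg hk.symm]
        lia
      · exact absurd ⟨j, rfl⟩ h)
    ⟨Sum.inl g₀, by simp⟩ (Sum.elim (fun a => c a.1) id) (fun i => rfl)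
  have hcol : ∀ i, Sum.inr i ∈ σ ∨ ∃ a : G, Sum.inl a ∈ σ ∧ c a.1 = i := fun i => by
    have : i ∈ σ.image (Sum.elim (fun a : G => c a.1) id) := by rw [hσc]; exact mem_univ _
    obtain ⟨a | j, hx, rfl⟩ := mem_image.1 this
    · exact Or.inr ⟨a, hx, rfl⟩
    · exact Or.inl hx
  obtain ⟨x, hx⟩ : ∃ x : G, Sum.inl x ∈ σ := by
    by_contra! h
    obtain ⟨i, hi⟩ := hdom (Sum.inl g₀)
    have := hi (Sum.inr i) ((hcol i).resolve_right fun ⟨a, ha, _⟩ => h a ha)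
    simp only [v, Sum.elim_inl, Sum.elim_inr, if_true] at this
    lia
  choose p hpσ hp using fun i => σ.exists_min_image (v i) ⟨_, hx⟩
  have hμ0 : ∀ i, 0 ≤ v i (p i) + 1 := fun i => by
    rcases p i with a | j
    · simp only [v, Sum.elim_inl]
      lia
    · simp only [v, Sum.elim_inr]
      split_ifs <;> lia
  have hsum : (N : ℤ) < ∑ i, (v i (p i) + 1) := by
    by_contra! h
    let b : I → ℕ := fun i => (v i (p i) + 1).toNat
    have hb : ∀ i, (b i : ℤ) = v i (p i) + 1 := fun i => Int.toNat_of_nonneg (hμ0 i)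
    have hbN : ∑ i, b i ≤ N := by
      zify
      simpa only [hb] using h
    obtain ⟨i, hi⟩ := hdom (Sum.inl ⟨b + Pi.single i₁ (N - ∑ i, b i), mkG _ (by
      simp only [Pi.add_apply, sum_add_distrib, sum_pi_single', mem_univ, if_true]
      lia)⟩)
    have h1 := hi _ (hpσ i)
    have h2 := hb i
    simp only [v, Sum.elim_inl, Pi.add_apply] at h1 h2
    push_cast at h1
    lia
  have hnear : ∀ (w : G), Sum.inl w ∈ σ → ∀ k, v k (p k) ≤ w.1 k ∧
      (w.1 k : ℤ) + 1 ≤ v k (p k) + 1 + Fintype.card I := fun w hw k => by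
    have h1 : ∀ k, 0 ≤ (w.1 k : ℤ) - v k (p k) := fun k => sub_nonneg.2 (hp k _ hw)
    have h2 := single_le_sum (f := fun k => (w.1 k : ℤ) - v k (p k)) (fun i _ => h1 i) (mem_univ k)
    have h3 : ((∑ i, w.1 i : ℕ) : ℤ) = N := by rw [hG w]
    rw [sum_add_distrib] at hsum
    simp only [sum_sub_distrib, sum_const, card_univ, nsmul_eq_mul, mul_one] at h2 hsum
    push_cast at h3
    exact ⟨hp k _ hw, by linarith⟩
  refine ⟨x.1, hG x, fun i => ?_⟩
  rcases hcol i with h | ⟨w, hw, hwi⟩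
  · left
    have h1 := hp i _ h
    have h2 := (hnear x hx i).2
    have h3 : v i (Sum.inr i) = -1 := by simp [v]
    lia
  · refine Or.inr ⟨w.1, hG w, hwi, fun k => ?_⟩
    have h1 := hnear x hx k
    have h2 := hnear w hw k
    lia

/-- If closed sets `F i` cover the standard simplex, some point of the simplex lies in `F i` for
every `i` in its support. -/
theorem exists_mem_of_stdSimplex_subset_iUnion {I : Type*} [Fintype I] [Nonempty I]
    (F : I → Set (I → ℝ)) (hF : ∀ i, IsClosed (F i)) (hcover : stdSimplex ℝ I ⊆ ⋃ i, F i) :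
    ∃ x ∈ stdSimplex ℝ I, ∀ i, x i = 0 ∨ x ∈ F i := by
  classical
  set d := Fintype.card I
  let r : ℕ → (I → ℕ) → I → ℝ := fun N a i => (a i : ℝ) / (N + 1 : ℕ)
  have hr : ∀ N a, ∑ i, a i = N + 1 → r N a ∈ stdSimplex ℝ I := fun N a ha => by
    refine ⟨fun i => by positivity, ?_⟩
    rw [← sum_div, ← Nat.cast_sum, ha]
    exact div_self (by positivity)
  have key : ∀ N : ℕ, ∃ x ∈ stdSimplex ℝ I, ∀ i, x i ≤ (d : ℝ) / (N + 1 : ℕ) ∨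
      ∃ w ∈ F i, dist w x ≤ (d : ℝ) / (N + 1 : ℕ) := fun N => by
    have hc : ∀ a : I → ℕ, ∃ i, ∑ i, a i = N + 1 → r N a ∈ F i := fun a => by
      by_cases ha : ∑ i, a i = N + 1
      · obtain ⟨i, hi⟩ := Set.mem_iUnion.1 (hcover (hr N a ha))
        exact ⟨i, fun _ => hi⟩
      · exact ⟨Classical.arbitrary I, fun h => absurd h ha⟩
    choose c hc using hc
    obtain ⟨x, hxN, hx⟩ := exists_grid_point_near_colors (N + 1) c
    refine ⟨r N x, hr N x hxN, fun i => ?_⟩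
    rcases hx i with h | ⟨w, hwN, rfl, hw⟩
    · left
      simp only [r]
      gcongr
    · refine Or.inr ⟨r N w, hc w hwN, (dist_pi_le_iff (by positivity)).2 fun k => ?_⟩
      obtain ⟨h1, h2⟩ := hw k
      rw [Real.dist_eq]
      simp only [r]
      rw [← sub_div, abs_div, Nat.abs_cast]
      gcongr
      rw [abs_le]
      have h1' : (w k : ℝ) ≤ x k + d := by exact_mod_cast h1
      have h2' : (x k : ℝ) ≤ w k + d := by exact_mod_cast h2
      constructor <;> linarith
  choose x hx hxF using key
  obtain ⟨y, hy, φ, hφ, hlim⟩ := (isCompact_stdSimplex ℝ I).tendsto_subseq hx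
  have hε : Filter.Tendsto (fun N => (d : ℝ) / (φ N + 1 : ℕ)) Filter.atTop (nhds 0) :=
    (tendsto_const_div_atTop_nhds_zero_nat (d : ℝ)).comp
      ((Filter.tendsto_add_atTop_nat 1).comp hφ.tendsto_atTop)
  refine ⟨y, hy, fun i => or_iff_not_imp_left.2 fun hyi => ?_⟩
  have hpos : 0 < y i := lt_of_le_of_ne (hy.1 i) (Ne.symm hyi)
  have hlimi := (tendsto_pi_nhds.1 hlim) i
  rw [← (hF i).closure_eq, Metric.mem_closure_iff]
  intro ε hεpos
  have h1 := hε.eventually_lt hlimi hpos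
  have h2 := hε.eventually_lt_const (half_pos hεpos)
  have h3 := Metric.tendsto_nhds.1 hlim _ (half_pos hεpos)
  obtain ⟨N, h1, h2, h3⟩ := (h1.and (h2.and h3)).exists
  obtain ⟨w, hw, hwd⟩ := (hxF (φ N) i).resolve_left h1.not_ge
  refine ⟨w, hw, ?_⟩
  have h4 := dist_triangle_left y w (x (φ N))
  rw [dist_comm w] at hwd
  simp only [Function.comp] at h3
  linarith

/-- The KKM lemma: if `C 1, …, C n` are closed subsets of the unit simplex such that each
face `Δ_J = conv {e j : j ∈ J}` is contained in `⋃ j ∈ J, C j`, then `⋂ i, C i ≠ ∅`. -/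
theorem KKM_lemma (n : ℕ) (e : Fin n → (Fin n → ℝ)) (he : ∀ i, e i = Pi.single i 1)
    (C : Fin n → Set (Fin n → ℝ))
    (hclosed : ∀ i, IsClosed (C i))
    (hsub : ∀ i, C i ⊆ stdSimplex ℝ (Fin n))
    (hcover : ∀ J : Finset (Fin n), J.Nonempty →
      convexHull ℝ (e '' ↑J) ⊆ ⋃ j ∈ J, C j) :
    (⋂ i, C i).Nonempty := by
  rcases isEmpty_or_nonempty (Fin n) with hn | hn
  · exact ⟨0, Set.mem_iInter.2 fun i => hn.elim i⟩
  have hne : ∀ i, (C i).Nonempty := fun i => by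
    have := hcover {i} (singleton_nonempty i) (subset_convexHull ℝ _ ⟨i, by simp, rfl⟩)
    simp only [mem_singleton, Set.iUnion_iUnion_eq_left] at this
    exact ⟨_, this⟩
  let D : (Fin n → ℝ) → ℝ := fun x => ∑ i, Metric.infDist x (C i)
  have hDcont : Continuous D := by fun_prop
  obtain ⟨x, hx, hxF⟩ := exists_mem_of_stdSimplex_subset_iUnion
    (fun i => {x : Fin n → ℝ | x i * D x ≤ Metric.infDist x (C i)})
    (fun i => isClosed_le (by fun_prop) (by fun_prop)) (fun x hx => by
      by_contra h
      simp only [Set.mem_iUnion, Set.mem_ofPred_eq, not_exists, not_le] at h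
      have := sum_lt_sum_of_nonempty univ_nonempty fun i _ => h i
      rw [← sum_mul, hx.2, one_mul] at this
      exact lt_irrefl _ this)
  have hle : ∀ i, x i * D x ≤ Metric.infDist x (C i) := fun i => by
    rcases hxF i with h | h
    · rw [h, zero_mul]
      exact Metric.infDist_nonneg
    · exact h
  have heq : ∀ i, x i * D x = Metric.infDist x (C i) := by
    have := (sum_eq_sum_iff_of_le fun i (_ : i ∈ univ) => hle i).1
      (by rw [← sum_mul, hx.2, one_mul])
    exact fun i => this i (mem_univ i)
  let J : Finset (Fin n) := {i | x i ≠ 0}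
  have hsumJ : ∑ i ∈ J, x i = 1 := by rw [sum_filter_ne_zero, hx.2]
  have hJ : J.Nonempty := nonempty_of_sum_ne_zero (hsumJ.trans_ne one_ne_zero)
  have hmem : x ∈ convexHull ℝ (e '' ↑J) := by
    have h := (convex_convexHull ℝ (e '' ↑J)).sum_mem (t := J) (w := x) (z := e)
      (fun i _ => hx.1 i) hsumJ fun i hi => subset_convexHull ℝ _ ⟨i, hi, rfl⟩
    convert h
    ext k
    simp [he, Finset.sum_apply, Pi.single_apply, J]
  obtain ⟨j, hj, hjC⟩ := Set.mem_iUnion₂.1 (hcover J hJ hmem)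
  have hD : D x = 0 := by
    have := heq j
    rw [Metric.infDist_zero_of_mem hjC] at this
    exact (mul_eq_zero.1 this).resolve_left (mem_filter.1 hj).2
  refine ⟨x, Set.mem_iInter.2 fun i => ((hclosed i).mem_iff_infDist_zero (hne i)).2 ?_⟩
  rw [← heq i, hD, mul_zero]
end

section
/- Sperner's lemma: given a simplicial subdivision of the unit simplex $\Delta \subseteq \mathbb{R}^n$ and a Sperner labeling of its vertices, some simplex of the subdivision is completely labeled, i.e., its $n$ vertices carry all $n$ distinct labels. -/
open Finset

/-- `𝒮` is a simplicial subdivision of the unit simplex in `ℝ^n`: a finite collection of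
`(n-1)`-simplices (each given by its `n` affinely independent vertices, lying in the unit
simplex) whose union is the unit simplex, and such that the intersection of any two of
them is empty or a common face. -/
def IsSubdivision (n : ℕ) (𝒮 : Finset (Finset (Fin n → ℝ))) : Prop :=
  (∀ S ∈ 𝒮, S.card = n ∧ AffineIndependent ℝ ((↑) : S → (Fin n → ℝ)) ∧
    (↑S : Set (Fin n → ℝ)) ⊆ stdSimplex ℝ (Fin n)) ∧
  (⋃ S ∈ 𝒮, convexHull ℝ (↑S : Set (Fin n → ℝ))) = stdSimplex ℝ (Fin n) ∧
  (∀ S ∈ 𝒮, ∀ T ∈ 𝒮,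
    convexHull ℝ (↑S : Set (Fin n → ℝ)) ∩ convexHull ℝ (↑T : Set (Fin n → ℝ)) = ∅ ∨
    ∃ F : Finset (Fin n → ℝ), F ⊆ S ∧ F ⊆ T ∧
      convexHull ℝ (↑S : Set (Fin n → ℝ)) ∩ convexHull ℝ (↑T : Set (Fin n → ℝ)) =
        convexHull ℝ (↑F : Set (Fin n → ℝ)))

/-- `ℓ` is a Sperner labeling of the vertices of the subdivision `𝒮`: each vertex `v`
gets a label `ℓ v` with `v (ℓ v) > 0`. -/
def IsSpernerLabeling (n : ℕ) (𝒮 : Finset (Finset (Fin n → ℝ)))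
    (ℓ : (Fin n → ℝ) → Fin n) : Prop :=
  ∀ S ∈ 𝒮, ∀ v ∈ S, 0 < v (ℓ v)

/-- A simplex `S` of the subdivision is completely labeled: its vertices carry all `n` labels. -/
def IsCompletelyLabeled (n : ℕ) (S : Finset (Fin n → ℝ))
    (ℓ : (Fin n → ℝ) → Fin n) : Prop :=
  ∀ i : Fin n, ∃ v ∈ S, ℓ v = i

open MeasureTheory

open Polynomial in
/-- The map `t ↦ det (1 + t (A - 1))` is a polynomial. -/
lemma exists_polynomial_eval_eq_det {V : Type*} [AddCommGroup V] [Module ℝ V]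
    [FiniteDimensional ℝ V] (A : V →ₗ[ℝ] V) :
    ∃ p : ℝ[X], ∀ t : ℝ, p.eval t = LinearMap.det (LinearMap.id + t • (A - LinearMap.id)) := by
  let b := Module.finBasis ℝ V
  let M := LinearMap.toMatrix b b (A - LinearMap.id)
  refine ⟨Matrix.det (1 + (X : ℝ[X]) • M.map C), fun t ↦ ?_⟩
  rw [← LinearMap.det_toMatrix b, map_add, map_smul, LinearMap.toMatrix_id]
  rw [← coe_evalRingHom, RingHom.map_det]
  congr 1
  ext i j
  simp only [coe_evalRingHom, RingHom.mapMatrix_apply, Matrix.map_apply, Matrix.add_apply,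
    Matrix.smul_apply, Matrix.one_apply, smul_eq_mul, eval_add, eval_mul, eval_X, eval_C, M]
  split_ifs <;> simp

/-- A map on a normed space is `K`-Lipschitz as soon as it is so on each set of a finite closed
cover. -/
lemma LipschitzWith.of_finite_closed_cover {ι E F : Type*} [Finite ι] [NormedAddCommGroup E]
    [NormedSpace ℝ E] [PseudoMetricSpace F] {K : NNReal} {f : E → F} {C : ι → Set E}
    (hcl : ∀ i, IsClosed (C i)) (hcov : ⋃ i, C i = Set.univ)
    (hf : ∀ i, LipschitzOnWith K f (C i)) : LipschitzWith K f := by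
  have hcont : Continuous f :=
    (locallyFinite_of_finite C).continuous hcov hcl fun i ↦ (hf i).continuousOn
  refine LipschitzWith.of_dist_le_mul fun x y ↦ ?_
  let γ : ℝ → E := AffineMap.lineMap x y
  have hγ : Continuous γ := AffineMap.lineMap_continuous
  have hs : IsClosed {u : ℝ | dist (f x) (f (γ u)) ≤ K * (u * dist x y)} :=
    isClosed_le (by fun_prop) (by fun_prop)
  have key := IsClosed.Icc_subset_of_forall_exists_gt (a := 0) (b := 1)
    (hs.inter isClosed_Icc) (by simp [γ]) ?_
  · simpa [γ] using key (Set.right_mem_Icc.2 zero_le_one)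
  rintro u ⟨hu, -⟩ v huv
  have hnear : ∀ᶠ z in nhds (γ u), ∀ i, z ∈ C i → γ u ∈ C i := by
    refine Filter.eventually_all.2 fun i ↦ ?_
    by_cases h : γ u ∈ C i
    · simp [h]
    · filter_upwards [(hcl i).isOpen_compl.mem_nhds h] with z hz hz'
      exact absurd hz' hz
  obtain ⟨w, hw, huw⟩ := (((hγ.tendsto u).eventually hnear).filter_mono
    nhdsWithin_le_nhds |>.and (Ioc_mem_nhdsGT huv)).exists
  refine ⟨w, ?_, huw⟩
  obtain ⟨i, hi⟩ := Set.mem_iUnion.1 (hcov ▸ Set.mem_univ (γ w))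
  have h1 := (hf i).dist_le_mul _ (hw i hi) _ hi
  rw [dist_lineMap_lineMap, Real.dist_eq, abs_sub_comm, abs_of_pos (sub_pos.2 huw.1)] at h1
  replace hu : dist (f x) (f (γ u)) ≤ K * (u * dist x y) := hu
  have h2 := dist_triangle (f x) (f (γ u)) (f (γ w))
  change dist (f x) (f (γ w)) ≤ K * (w * dist x y)
  linarith

/-- Taking coordinatewise positive parts is 1-Lipschitz for the sup norm. -/
lemma lipschitzWith_posPart_pi {ι : Type*} [Fintype ι] :
    LipschitzWith 1 fun x : ι → ℝ ↦ x⁺ := by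
  refine LipschitzWith.of_dist_le_mul fun x y ↦ ?_
  rw [NNReal.coe_one, one_mul]
  refine (dist_pi_le_iff dist_nonneg).2 fun k ↦ ?_
  simp only [Pi.posPart_apply]
  exact (by simpa using lipschitzWith_posPart.dist_le_mul (x k) (y k) :
    dist (x k)⁺ (y k)⁺ ≤ dist (x k) (y k)).trans (dist_le_pi_dist x y k)

/-- Consider a piecewise linear self-map of the nonnegative orthant, linear on each piece of a
finite cover by closed sets with negligible overlaps. If it preserves the coordinate sum and the
faces of the orthant, then one of its linear pieces is invertible. -/
lemma exists_det_ne_zero_of_preserves_faces {n : ℕ} {ι : Type*} [Fintype ι]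
    {C : ι → Set (Fin n → ℝ)} {A : ι → (Fin n → ℝ) →ₗ[ℝ] (Fin n → ℝ)}
    (hcl : ∀ i, IsClosed (C i)) (hcov : ⋃ i, C i = {x | 0 ≤ x})
    (hnull : ∀ i j, i ≠ j → volume (C i ∩ C j) = 0)
    (hagree : ∀ i j, ∀ x ∈ C i ∩ C j, A i x = A j x)
    (hnonneg : ∀ i, ∀ x ∈ C i, 0 ≤ A i x)
    (hsum : ∀ i, ∀ x ∈ C i, ∑ k, A i x k = ∑ k, x k)
    (hface : ∀ i, ∀ x ∈ C i, ∀ k, x k = 0 → A i x k = 0) :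
    ∃ i, LinearMap.det (A i) ≠ 0 := by
  by_contra! hdet
  have hmem : ∀ x : Fin n → ℝ, ∃ i, x⁺ ∈ C i := fun x ↦ by
    simpa using hcov.ge (posPart_nonneg x)
  choose c hc using hmem
  have hC0 : ∀ {i x}, x ∈ C i → 0 ≤ x := fun {i x} hx ↦ hcov.le (Set.mem_iUnion_of_mem i hx)
  let N : ι → (Fin n → ℝ) →ₗ[ℝ] (Fin n → ℝ) := fun i ↦ A i - LinearMap.id
  -- the displacement of the map, extended to the whole space
  let g : (Fin n → ℝ) → (Fin n → ℝ) := fun x ↦ A (c x) x⁺ - x⁺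
  have hg : ∀ i x, x⁺ ∈ C i → g x = N i x⁺ := fun i x hx ↦ by
    simp [g, N, hagree _ _ _ ⟨hc x, hx⟩]
  obtain ⟨K, hK⟩ : ∃ K : NNReal, LipschitzWith K g := by
    let L : ι → NNReal := fun i ↦ ‖(N i).toContinuousLinearMap‖₊
    refine ⟨Finset.univ.sup L, .of_finite_closed_cover (C := fun i ↦ (fun x ↦ x⁺) ⁻¹' C i)
      (fun i ↦ (hcl i).preimage lipschitzWith_posPart_pi.continuous) ?_ fun i ↦ ?_⟩
    · exact Set.eq_univ_of_forall fun x ↦ Set.mem_iUnion_of_mem (c x) (hc x)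
    · have h1 : LipschitzWith (L i * 1) fun x : Fin n → ℝ ↦ N i x⁺ :=
        ((N i).toContinuousLinearMap.lipschitz).comp lipschitzWith_posPart_pi
      rw [mul_one] at h1
      intro x hx y hy
      rw [hg i x hx, hg i y hy]
      exact (h1.weaken (Finset.le_sup (Finset.mem_univ i))) x y
  let D : Set (Fin n → ℝ) := Set.Ici 0 ∩ {x | ∑ k, x k ≤ 1}
  have hDcl : IsClosed D :=
    isClosed_Ici.inter (isClosed_le (by fun_prop) (by fun_prop))
  have hDsub : D ⊆ Set.Icc 0 1 := fun x hx ↦ ⟨hx.1, fun k ↦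
    (Finset.single_le_sum (fun j _ ↦ hx.1 j) (Finset.mem_univ k)).trans hx.2⟩
  have hDfin : volume D ≠ ⊤ :=
    ((Metric.isBounded_Icc 0 1).subset hDsub).measure_lt_top.ne
  have hDpos : volume D ≠ 0 := by
    have hO : IsOpen {x : Fin n → ℝ | (∀ k, 0 < x k) ∧ ∑ k, x k < 1} := by
      simp only [Set.ofPred_and, Set.ofPred_forall]
      exact (isOpen_iInter_of_finite fun k ↦ isOpen_lt (by fun_prop) (by fun_prop)).inter
        (isOpen_lt (by fun_prop) (by fun_prop))
    have hne : {x : Fin n → ℝ | (∀ k, 0 < x k) ∧ ∑ k, x k < 1}.Nonempty := by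
      refine ⟨fun _ ↦ 1 / (n + 1), fun _ ↦ by positivity, ?_⟩
      simp only [Finset.sum_const, Finset.card_univ, Fintype.card_fin, nsmul_eq_mul]
      field_simp
      linarith
    have hsub : {x : Fin n → ℝ | (∀ k, 0 < x k) ∧ ∑ k, x k < 1} ⊆ D := fun x hx ↦
      ⟨fun k ↦ (hx.1 k).le, hx.2.le⟩
    exact ((hO.measure_pos volume hne).trans_le (measure_mono hsub)).ne'
  have hDunion : D = ⋃ i, C i ∩ D := by
    rw [← Set.iUnion_inter, hcov]
    exact (Set.inter_eq_right.2 fun x hx ↦ hx.1).symm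
  let B : ℝ → ι → (Fin n → ℝ) →ₗ[ℝ] (Fin n → ℝ) :=
    fun t i ↦ LinearMap.id + t • N i
  choose p hp using fun i ↦ exists_polynomial_eval_eq_det (A i)
  have hBdet : ∀ t i, LinearMap.det (B t i) = (p i).eval t := fun t i ↦ (hp i t).symm
  have hmain : ∀ t : ℝ, 0 ≤ t → t ≤ 1 → t * K < 1 → (∀ i, 0 < (p i).eval t) →
      ∑ i, (p i).eval t * volume.real (C i ∩ D) = volume.real D := by
    intro t ht0 ht1 htK hpos
    let h : (Fin n → ℝ) → (Fin n → ℝ) := fun x ↦ x + t • g x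
    have hbij : Function.Bijective h := by
      have happ : ApproximatesLinearOn h
          (ContinuousLinearEquiv.refl ℝ (Fin n → ℝ) : (Fin n → ℝ) →L[ℝ] (Fin n → ℝ)) Set.univ
          (t.toNNReal * K) := by
        intro x _ y _
        have h1 : h x - h y - (x - y) = t • (g x - g y) := by
          simp only [h, smul_sub]; abel
        simp only [ContinuousLinearEquiv.coe_refl, ContinuousLinearMap.id_apply, h1, norm_smul,
          NNReal.coe_mul, Real.coe_toNNReal t ht0, Real.norm_of_nonneg ht0, mul_assoc]
        gcongr
        simpa [dist_eq_norm] using hK.dist_le_mul x y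
      have hcon : Subsingleton (Fin n → ℝ) ∨ t.toNNReal * K <
          ‖((ContinuousLinearEquiv.refl ℝ (Fin n → ℝ)).symm :
            (Fin n → ℝ) →L[ℝ] (Fin n → ℝ))‖₊⁻¹ := by
        rcases subsingleton_or_nontrivial (Fin n → ℝ) with hs | hs
        · exact .inl hs
        · right
          rw [← NNReal.coe_lt_coe]
          simpa [ht0] using htK
      exact ⟨Set.injOn_univ.1 (happ.injOn hcon), happ.surjective hcon⟩
    have hhB : ∀ i, ∀ x ∈ C i, h x = B t i x := fun i x hx ↦ by
      have hx' : x⁺ = x := posPart_eq_self.2 (hC0 hx)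
      simp [h, B, hg i x (hx'.symm ▸ hx), hx']
    have hhsum : ∀ x, 0 ≤ x → ∑ k, h x k = ∑ k, x k := fun x hx ↦ by
      obtain ⟨i, hi⟩ := Set.mem_iUnion.1 (hcov.ge hx)
      rw [hhB i x hi]
      simp [B, N, Finset.sum_add_distrib, ← Finset.mul_sum, hsum i x hi]
    have hhnonneg : ∀ x, 0 ≤ x → 0 ≤ h x := fun x hx k ↦ by
      obtain ⟨i, hi⟩ := Set.mem_iUnion.1 (hcov.ge hx)
      have h1 := hnonneg i x hi k
      have h2 := hx k
      rw [hhB i x hi]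
      simp only [B, N, LinearMap.add_apply, LinearMap.smul_apply, LinearMap.sub_apply,
        LinearMap.id_apply, Pi.add_apply, Pi.smul_apply, Pi.sub_apply, smul_eq_mul, Pi.zero_apply]
        at h1 h2 ⊢
      nlinarith [mul_nonneg ht0 h1, mul_nonneg (sub_nonneg.2 ht1) h2]
    have hhneg : ∀ x, 0 ≤ h x → 0 ≤ x := fun x hx k ↦ by
      by_contra! hk
      have hk' : x⁺ k = 0 := by
        rw [Pi.posPart_apply]
        exact posPart_eq_zero.2 hk.le
      have h1 := hx k
      simp only [h, g, Pi.add_apply, Pi.smul_apply, Pi.sub_apply, hface _ _ (hc x) k hk', hk',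
        sub_zero, smul_zero, add_zero] at h1
      exact absurd hk h1.not_gt
    have himage : h '' D = D := by
      apply Set.Subset.antisymm
      · rintro _ ⟨x, hx, rfl⟩
        exact ⟨hhnonneg x hx.1, (hhsum x hx.1).trans_le hx.2⟩
      · intro y hy
        obtain ⟨x, rfl⟩ := hbij.2 y
        have hx := hhneg x hy.1
        exact ⟨x, ⟨hx, (hhsum x hx).symm.trans_le hy.2⟩, rfl⟩
    have hpiece : ∀ i, h '' (C i ∩ D) = B t i '' (C i ∩ D) := fun i ↦
      Set.image_congr fun x hx ↦ hhB i x hx.1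
    have hclosed : ∀ i, IsClosed (B t i '' (C i ∩ D)) := fun i ↦
      (((isCompact_Icc.of_isClosed_subset ((hcl i).inter hDcl)
        (Set.inter_subset_right.trans hDsub))).image
        (LinearMap.continuous_of_finiteDimensional (B t i))).isClosed
    have hvol : volume D = ∑ i, volume (B t i '' (C i ∩ D)) := by
      conv_lhs => rw [← himage, hDunion, Set.image_iUnion]
      simp only [hpiece]
      rw [measure_iUnion₀ _ fun i ↦ (hclosed i).measurableSet.nullMeasurableSet, tsum_fintype]
      intro i j hij
      change volume (B t i '' (C i ∩ D) ∩ B t j '' (C j ∩ D)) = 0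
      rw [← hpiece, ← hpiece, ← Set.image_inter hbij.1]
      have hsub : h '' (C i ∩ D ∩ (C j ∩ D)) ⊆ B t i '' (C i ∩ C j) := by
        rintro _ ⟨x, hx, rfl⟩
        exact ⟨x, ⟨hx.1.1, hx.2.1⟩, (hhB i x hx.1.1).symm⟩
      refine measure_mono_null hsub ?_
      rw [Measure.addHaar_image_linearMap, hnull i j hij, mul_zero]
    rw [measureReal_def, hvol, ENNReal.toReal_sum]
    · refine Finset.sum_congr rfl fun i _ ↦ ?_
      rw [Measure.addHaar_image_linearMap, hBdet, abs_of_pos (hpos i), ENNReal.toReal_mul,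
        ENNReal.toReal_ofReal (hpos i).le, measureReal_def]
    · intro i hi
      exact ((ENNReal.sum_lt_top.1 (hvol ▸ hDfin.lt_top)) i hi).ne
  let P : Polynomial ℝ := ∑ i, p i * Polynomial.C (volume.real (C i ∩ D))
  have hP : P = Polynomial.C (volume.real D) := by
    refine Polynomial.eq_of_infinite_eval_eq _ _ (Set.Infinite.mono (s := {t : ℝ |
      (0 ≤ t ∧ t ≤ 1) ∧ t * K < 1 ∧ ∀ i, 0 < (p i).eval t}) ?_ ?_)
    · rintro t ⟨⟨ht0, ht1⟩, htK, hpos⟩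
      simpa [P, Polynomial.eval_finsetSum] using hmain t ht0 ht1 htK hpos
    · have hev : ∀ᶠ t : ℝ in nhdsWithin 0 (Set.Ioi 0),
          (0 ≤ t ∧ t ≤ 1) ∧ t * K < 1 ∧ ∀ i, 0 < (p i).eval t := by
        refine .and (by filter_upwards [Ioc_mem_nhdsGT one_pos] with t ht using ⟨ht.1.le, ht.2⟩)
          (Filter.Eventually.filter_mono nhdsWithin_le_nhds
            (.and ?_ (Filter.eventually_all.2 fun i ↦ ?_)))
        · have : Continuous fun t : ℝ ↦ t * K := by fun_prop
          exact this.continuousAt.eventually_lt_const (by simp)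
        · refine (p i).continuous.continuousAt.eventually_const_lt ?_
          simp [hp]
      obtain ⟨u, hu, hsub⟩ := mem_nhdsGT_iff_exists_Ioo_subset.1 hev
      exact (Set.Ioo_infinite hu).mono hsub
  have h1 := congrArg (Polynomial.eval 1) hP
  have hp1 : ∀ i, (p i).eval 1 = 0 := fun i ↦ by simp [hp, hdet]
  simp only [P, Polynomial.eval_finsetSum, Polynomial.eval_mul, hp1, zero_mul,
    Finset.sum_const_zero, Polynomial.eval_C] at h1
  exact (ENNReal.toReal_ne_zero.2 ⟨hDpos, hDfin⟩) h1.symm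

/-- The closed convex cone generated by a finite set of points. -/
def coneOver {n : ℕ} (S : Finset (Fin n → ℝ)) : Set (Fin n → ℝ) :=
  {x | ∃ w : (Fin n → ℝ) → ℝ, (∀ v ∈ S, 0 ≤ w v) ∧ ∑ v ∈ S, w v • v = x}

lemma isClosed_coneOver {n : ℕ} {S : Finset (Fin n → ℝ)}
    (hS : LinearIndependent ℝ ((↑) : S → (Fin n → ℝ))) : IsClosed (coneOver S) := by
  have hemb := LinearMap.isClosedEmbedding_of_injective
    (LinearMap.ker_eq_bot.2 hS.fintypeLinearCombination_injective)
  convert hemb.isClosedMap _ (isClosed_Ici (a := (0 : S → ℝ))) using 1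
  ext x
  constructor
  · rintro ⟨w, hw, rfl⟩
    refine ⟨fun v ↦ w v, fun v ↦ hw v v.2, ?_⟩
    rw [Fintype.linearCombination_apply]
    exact S.sum_coe_sort fun v ↦ w v • v
  · rintro ⟨w, hw, rfl⟩
    refine ⟨fun v ↦ if hv : v ∈ S then w ⟨v, hv⟩ else 0, fun v hv ↦ ?_, ?_⟩
    · simpa [hv] using hw ⟨v, hv⟩
    · rw [Fintype.linearCombination_apply, ← S.sum_coe_sort]
      simp

/-- Affinely independent points of the unit simplex are linearly independent. -/
lemma AffineIndependent.linearIndependent_of_subset_stdSimplex {n : ℕ}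
    {S : Finset (Fin n → ℝ)} (hS : AffineIndependent ℝ ((↑) : S → (Fin n → ℝ)))
    (hsub : (↑S : Set (Fin n → ℝ)) ⊆ stdSimplex ℝ (Fin n)) :
    LinearIndependent ℝ ((↑) : S → (Fin n → ℝ)) := by
  rw [linearIndependent_iff']
  intro s w hw
  refine affineIndependent_iff.1 hS s w ?_ hw
  have h1 : ∑ k, (∑ v ∈ s, w v • (v : Fin n → ℝ)) k = 0 := by rw [hw]; simp
  simp only [Finset.sum_apply, Pi.smul_apply, smul_eq_mul] at h1
  rw [Finset.sum_comm] at h1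
  rw [← h1]
  refine Finset.sum_congr rfl fun v _ ↦ ?_
  rw [← Finset.mul_sum, (hsub v.2).2, mul_one]

lemma coneOver_subset {n : ℕ} {S : Finset (Fin n → ℝ)}
    (hsub : (↑S : Set (Fin n → ℝ)) ⊆ stdSimplex ℝ (Fin n)) : coneOver S ⊆ {x | 0 ≤ x} := by
  rintro _ ⟨w, hw, rfl⟩
  exact Finset.sum_nonneg fun v hv ↦ smul_nonneg (hw v hv) (show 0 ≤ v from (hsub hv).1)

/-- A nonzero point of the cone over a set of points of the unit simplex, scaled to the unit
simplex, lies in their convex hull. -/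
lemma smul_mem_convexHull_of_mem_coneOver {n : ℕ} {S : Finset (Fin n → ℝ)}
    (hsub : (↑S : Set (Fin n → ℝ)) ⊆ stdSimplex ℝ (Fin n)) {x : Fin n → ℝ}
    (hx : x ∈ coneOver S) (hx0 : 0 < ∑ k, x k) :
    (∑ k, x k)⁻¹ • x ∈ convexHull ℝ (↑S : Set (Fin n → ℝ)) := by
  obtain ⟨w, hw, hwx⟩ := hx
  have hsum : ∑ v ∈ S, w v = ∑ k, x k := by
    simp only [← hwx, Finset.sum_apply, Pi.smul_apply, smul_eq_mul]
    rw [Finset.sum_comm]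
    refine Finset.sum_congr rfl fun v hv ↦ ?_
    rw [← Finset.mul_sum, (hsub hv).2, mul_one]
  refine Finset.mem_convexHull'.2 ⟨fun v ↦ (∑ k, x k)⁻¹ * w v, fun v hv ↦ ?_, ?_, ?_⟩
  · exact mul_nonneg (inv_nonneg.2 hx0.le) (hw v hv)
  · rw [← Finset.mul_sum, hsum, inv_mul_cancel₀ hx0.ne']
  · simp only [mul_smul]
    rw [← Finset.smul_sum, hwx]

lemma smul_mem_coneOver {n : ℕ} {S : Finset (Fin n → ℝ)} {x : Fin n → ℝ}
    (hx : x ∈ convexHull ℝ (↑S : Set (Fin n → ℝ))) {r : ℝ} (hr : 0 ≤ r) :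
    r • x ∈ coneOver S := by
  obtain ⟨w, hw, -, rfl⟩ := Finset.mem_convexHull'.1 hx
  exact ⟨fun v ↦ r * w v, fun v hv ↦ mul_nonneg hr (hw v hv), by
    simp only [mul_smul]; rw [Finset.smul_sum]⟩

lemma sum_pos_of_nonneg_of_ne_zero {n : ℕ} {x : Fin n → ℝ} (hx : 0 ≤ x) (hx0 : x ≠ 0) :
    0 < ∑ k, x k := by
  obtain ⟨k, hk⟩ := Function.ne_iff.1 hx0
  exact Finset.sum_pos' (fun k _ ↦ hx k) ⟨k, Finset.mem_univ k, (hx k).lt_of_ne' hk⟩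

/-- Cones over two simplices of a subdivision meet inside the span of their common vertices. -/
lemma coneOver_inter_subset_span {n : ℕ} {𝒮 : Finset (Finset (Fin n → ℝ))}
    (h𝒮 : IsSubdivision n 𝒮) {S T : Finset (Fin n → ℝ)} (hS : S ∈ 𝒮) (hT : T ∈ 𝒮) :
    ∃ F : Finset (Fin n → ℝ), F ⊆ S ∧ F ⊆ T ∧
      coneOver S ∩ coneOver T ⊆ Submodule.span ℝ (↑F : Set (Fin n → ℝ)) := by
  have hS' := (h𝒮.1 S hS).2.2
  have hT' := (h𝒮.1 T hT).2.2
  obtain ⟨F, hFS, hFT, hF⟩ : ∃ F : Finset (Fin n → ℝ), F ⊆ S ∧ F ⊆ T ∧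
      convexHull ℝ (↑S : Set (Fin n → ℝ)) ∩ convexHull ℝ (↑T : Set (Fin n → ℝ)) =
        convexHull ℝ (↑F : Set (Fin n → ℝ)) := by
    rcases h𝒮.2.2 S hS T hT with h | h
    · exact ⟨∅, by simp, by simp, by simp [h]⟩
    · exact h
  refine ⟨F, hFS, hFT, fun x hx ↦ ?_⟩
  rcases eq_or_ne x 0 with rfl | hx0
  · exact zero_mem _
  have hpos := sum_pos_of_nonneg_of_ne_zero (coneOver_subset hS' hx.1) hx0
  have hmem := hF.le ⟨smul_mem_convexHull_of_mem_coneOver hS' hx.1 hpos,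
    smul_mem_convexHull_of_mem_coneOver hT' hx.2 hpos⟩
  exact (Submodule.smul_mem_iff _ (inv_ne_zero hpos.ne')).1
    (convexHull_min Submodule.subset_span (Submodule.convex _) hmem)

lemma iUnion_coneOver {n : ℕ} {𝒮 : Finset (Finset (Fin n → ℝ))} (h𝒮 : IsSubdivision n 𝒮)
    (hn : 0 < n) : ⋃ S : 𝒮, coneOver (S : Finset (Fin n → ℝ)) = {x | 0 ≤ x} := by
  apply Set.Subset.antisymm
  · exact Set.iUnion_subset fun S ↦ coneOver_subset (h𝒮.1 S S.2).2.2
  have hmem : ∀ y ∈ stdSimplex ℝ (Fin n), ∀ r : ℝ, 0 ≤ r →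
      r • y ∈ ⋃ S : 𝒮, coneOver (S : Finset (Fin n → ℝ)) := fun y hy r hr ↦ by
    obtain ⟨S, hS, hyS⟩ := Set.mem_iUnion₂.1 (h𝒮.2.1.ge hy)
    exact Set.mem_iUnion_of_mem ⟨S, hS⟩ (smul_mem_coneOver hyS hr)
  intro x hx
  rcases eq_or_ne x 0 with rfl | hx0
  · simpa using hmem _ (single_mem_stdSimplex ℝ ⟨0, hn⟩) 0 le_rfl
  have hpos := sum_pos_of_nonneg_of_ne_zero hx hx0
  have h := hmem ((∑ k, x k)⁻¹ • x)
    ⟨fun k ↦ mul_nonneg (inv_nonneg.2 hpos.le) (hx k), by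
      simp [← Finset.mul_sum, hpos.ne']⟩ _ hpos.le
  rwa [smul_inv_smul₀ hpos.ne'] at h

lemma volume_span_eq_zero_of_card_lt {n : ℕ} {F : Finset (Fin n → ℝ)} (hF : F.card < n) :
    volume (Submodule.span ℝ (↑F : Set (Fin n → ℝ)) : Set (Fin n → ℝ)) = 0 := by
  refine Measure.addHaar_submodule _ _ fun htop ↦ ?_
  have h := finrank_span_finset_le_card (R := ℝ) F
  rw [Set.finrank, htop, finrank_top, Module.finrank_fin_fun] at h
  omega

lemma exists_linearMap_of_linearIndependent {n : ℕ} {S : Finset (Fin n → ℝ)}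
    (hS : LinearIndependent ℝ ((↑) : S → (Fin n → ℝ))) (f : (Fin n → ℝ) → (Fin n → ℝ)) :
    ∃ A : (Fin n → ℝ) →ₗ[ℝ] (Fin n → ℝ), ∀ v ∈ S, A v = f v := by
  obtain ⟨A, hA⟩ := ((Module.Basis.span hS).constr ℝ fun v : S ↦ f v).exists_extend
  refine ⟨A, fun v hv ↦ ?_⟩
  have h := LinearMap.congr_fun hA (Module.Basis.span hS ⟨v, hv⟩)
  rw [Module.Basis.constr_basis, LinearMap.comp_apply, Submodule.subtype_apply,
    Module.Basis.span_apply] at h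
  exact h

/-- Sperner's lemma: any simplicial subdivision of the unit simplex with a Sperner
labeling contains a completely labeled simplex. -/
theorem sperner_lemma (n : ℕ) (𝒮 : Finset (Finset (Fin n → ℝ)))
    (h𝒮 : IsSubdivision n 𝒮) (ℓ : (Fin n → ℝ) → Fin n)
    (hℓ : IsSpernerLabeling n 𝒮 ℓ) :
    ∃ S ∈ 𝒮, IsCompletelyLabeled n S ℓ := by
  have hn : 0 < n := Fin.pos (ℓ 0)
  have hsub : ∀ S : 𝒮, (↑(S : Finset (Fin n → ℝ)) : Set (Fin n → ℝ)) ⊆ stdSimplex ℝ (Fin n) :=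
    fun S ↦ (h𝒮.1 S S.2).2.2
  have hli : ∀ S : 𝒮, LinearIndependent ℝ ((↑) : S.1 → (Fin n → ℝ)) :=
    fun S ↦ (h𝒮.1 S S.2).2.1.linearIndependent_of_subset_stdSimplex (hsub S)
  choose A hA using fun S : 𝒮 ↦
    exists_linearMap_of_linearIndependent (hli S) fun v ↦ Pi.single (ℓ v) (1 : ℝ)
  have hAw : ∀ (S : 𝒮) (w : (Fin n → ℝ) → ℝ), A S (∑ v ∈ (S : Finset (Fin n → ℝ)), w v • v) =
      ∑ v ∈ (S : Finset (Fin n → ℝ)), w v • Pi.single (ℓ v) (1 : ℝ) := fun S w ↦ by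
    rw [map_sum]
    exact Finset.sum_congr rfl fun v hv ↦ by rw [map_smul, hA S v hv]
  obtain ⟨S, hS⟩ : ∃ S, LinearMap.det (A S) ≠ 0 := by
    refine exists_det_ne_zero_of_preserves_faces (fun S ↦ isClosed_coneOver (hli S))
      (iUnion_coneOver h𝒮 hn) (fun S T hST ↦ ?_) (fun S T x hx ↦ ?_) ?_ ?_ ?_
    · obtain ⟨F, hFS, hFT, hF⟩ := coneOver_inter_subset_span h𝒮 S.2 T.2
      refine measure_mono_null hF (volume_span_eq_zero_of_card_lt ?_)
      have hcS := (h𝒮.1 S S.2).1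
      have hcT := (h𝒮.1 T T.2).1
      by_contra! hcard
      exact hST (Subtype.ext ((Finset.eq_of_subset_of_card_le hFS (hcS.trans_le hcard)).symm.trans
        (Finset.eq_of_subset_of_card_le hFT (hcT.trans_le hcard))))
    · obtain ⟨F, hFS, hFT, hF⟩ := coneOver_inter_subset_span h𝒮 S.2 T.2
      refine LinearMap.eqOn_span (s := (↑F : Set (Fin n → ℝ))) (fun v hv ↦ ?_) (hF hx)
      rw [hA S v (hFS hv), hA T v (hFT hv)]
    · rintro S _ ⟨w, hw, rfl⟩
      rw [hAw]
      exact Finset.sum_nonneg fun v hv ↦ smul_nonneg (hw v hv)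
        (Pi.single_nonneg.2 zero_le_one)
    · rintro S _ ⟨w, hw, rfl⟩
      rw [hAw]
      simp only [Finset.sum_apply, Pi.smul_apply, smul_eq_mul]
      rw [Finset.sum_comm, Finset.sum_comm (s := Finset.univ) (t := (S : Finset (Fin n → ℝ)))]
      refine Finset.sum_congr rfl fun v hv ↦ ?_
      rw [← Finset.mul_sum, ← Finset.mul_sum, (hsub S hv).2, Finset.sum_pi_single']
      simp
    · rintro S _ ⟨w, hw, rfl⟩ k hk
      rw [hAw]
      simp only [Finset.sum_apply, Pi.smul_apply, smul_eq_mul] at hk ⊢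
      have hterm := (Finset.sum_eq_zero_iff_of_nonneg fun v hv ↦
        mul_nonneg (hw v hv) ((hsub S hv).1 k)).1 hk
      refine Finset.sum_eq_zero fun v hv ↦ ?_
      rcases mul_eq_zero.1 (hterm v hv) with h | h
      · rw [h, zero_mul]
      · have hne : k ≠ ℓ v := by
          rintro rfl
          exact (hℓ S S.2 v hv).ne' h
        rw [Pi.single_eq_of_ne hne, mul_zero]
  refine ⟨S, S.2, fun i ↦ ?_⟩
  by_contra! hi
  obtain ⟨x, hx⟩ := (LinearMap.equivOfDetNeZero (A S) hS).surjective (Pi.single i 1)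
  replace hx : A S x = Pi.single i 1 := hx
  have hspan := (hli S).span_eq_top_of_card_eq_finrank' (by simp [(h𝒮.1 S S.2).1])
  have hzero : LinearMap.proj i ∘ₗ A S = 0 := LinearMap.ext_on hspan <| by
    rintro _ ⟨v, rfl⟩
    simp [hA S v v.2, Pi.single_eq_of_ne (hi v v.2).symm]
  simpa [hx] using LinearMap.congr_fun hzero x
end
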